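/- There exists a constant C > 0 such that for all n ≥ 1, the number of sumsets in F₂ⁿ satisfies |𝒮ₙ| ≤ 2^(2^(n−1) + n² + C). -/

import Mathlib

open Pointwise

/-- `V n` is the vector space `F₂ⁿ`. -/
abbrev V (n : ℕ) : Type := Fin n → ZMod 2

/-- `𝒮ₙ`: the family of sumsets `A + A` for `A ⊆ F₂ⁿ`. -/
def sumsets (n : ℕ) : Finset (Finset (V n)) :=
  Finset.image (fun A : Finset (V n) => A + A) Finset.univ

/-!
If `S = A + A`, then `A` and `B = Sᶜ` span no Schur triple `x + y = z` with `x, y ∈ A`, `z ∈ B`.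
Averaging over the common kernel of the large Fourier characters of `A` produces a set `P`, a union
of cosets of a subspace of bounded codimension, which almost contains `A` and still has few Schur
triples with `B`; so `B` is almost contained in the set `Q` of unpopular sums of `P`. There are
only `2 ^ O(n)` choices of `P` and `Q`. If `P` or `Q` has density at most `1 / 2 - δ`, then `A` or
`B`, and hence `S`, is one of at most `2 ^ (2 ^ n / 2)` sets.

Otherwise `P` and `Q` both have density nearly `1 / 2` and few Schur triples. By Hoffman's spectral
bound `Q` has a Fourier coefficient near `-1 / 2`, so it nearly contains the complement of a
hyperplane `H` through the origin, and `A` is nearly contained in a coset of `H`. After a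
translation `A` is almost disjoint from `H`. Either `S` contains `H`, which leaves `2 ^ (2 ^ n / 2)`
sets for each of the fewer than `2 ^ n` hyperplanes and gives the main term, or `S` misses some
nonzero `x ∈ H`. In the latter case `A` contains at most one point of each of the `2 ^ n / 4` cosets
of `{0, x}` outside `H`, which leaves about `3 ^ (2 ^ n / 4)` sets.
-/

open Finset
open scoped BigOperators Matrix

namespace SumsetCount

local notation "𝟙[" A "]" => Set.indicator (M := ℝ) (SetLike.coe A) 1

lemma indicator_nonneg {α : Type*} (A : Finset α) (x : α) : 0 ≤ 𝟙[A] x :=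
  Set.indicator_nonneg (fun _ _ ↦ zero_le_one) x

lemma indicator_le_one {α : Type*} (A : Finset α) (x : α) : 𝟙[A] x ≤ 1 :=
  Set.indicator_le_self' (fun _ _ ↦ zero_le_one) x

lemma abs_indicator_le_one {α : Type*} (A : Finset α) (x : α) : |𝟙[A] x| ≤ 1 := by
  rw [abs_of_nonneg (indicator_nonneg A x)]
  exact indicator_le_one A x

section SchurDensity

variable {G : Type*} [AddCommGroup G] [Fintype G]

lemma expect_comp_add_right (f : G → ℝ) (y : G) : 𝔼 x, f (x + y) = 𝔼 x, f x :=
  Fintype.expect_equiv (Equiv.addRight y) _ _ fun _ ↦ rfl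

lemma expect_comp_add_left (f : G → ℝ) (x : G) : 𝔼 y, f (x + y) = 𝔼 y, f y :=
  Fintype.expect_equiv (Equiv.addLeft x) _ _ fun _ ↦ rfl

/-- The average of `f x * f y * h z` over all Schur triples `x + y = z`. -/
noncomputable def schurDensity (f h : G → ℝ) : ℝ := 𝔼 x, 𝔼 y, f x * f y * h (x + y)

lemma schurDensity_eq_expect_conv_mul (f h : G → ℝ) :
    schurDensity f h = 𝔼 z, (𝔼 x, f x * f (z - x)) * h z := by
  simp only [schurDensity, expect_mul]
  rw [expect_comm univ univ (fun z x ↦ f x * f (z - x) * h z)]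
  refine expect_congr rfl fun x _ ↦ ?_
  rw [← expect_comp_add_left (fun z ↦ f x * f (z - x) * h z) x]
  simp only [add_sub_cancel_left]

lemma schurDensity_add_right (f h₁ h₂ : G → ℝ) :
    schurDensity f (h₁ + h₂) = schurDensity f h₁ + schurDensity f h₂ := by
  simp only [schurDensity, Pi.add_apply, mul_add, expect_add_distrib]

lemma schurDensity_smul_left (c : ℝ) (f h : G → ℝ) :
    schurDensity (c • f) h = c ^ 2 * schurDensity f h := by
  simp only [schurDensity, mul_expect, Pi.smul_apply, smul_eq_mul]
  exact expect_congr rfl fun x _ ↦ expect_congr rfl fun y _ ↦ by ring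

lemma schurDensity_mono_left {f g h : G → ℝ} (hf : 0 ≤ f) (hfg : f ≤ g) (hh : 0 ≤ h) :
    schurDensity f h ≤ schurDensity g h :=
  expect_le_expect fun x _ ↦ expect_le_expect fun y _ ↦
    mul_le_mul_of_nonneg_right (mul_le_mul (hfg x) (hfg y) (hf y) ((hf x).trans (hfg x))) (hh _)

lemma schurDensity_mono_right {f h₁ h₂ : G → ℝ} (hf : 0 ≤ f) (hh : h₁ ≤ h₂) :
    schurDensity f h₁ ≤ schurDensity f h₂ :=
  expect_le_expect fun x _ ↦ expect_le_expect fun y _ ↦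
    mul_le_mul_of_nonneg_left (hh _) (mul_nonneg (hf x) (hf y))

lemma schurDensity_indicator_le_expect (A : Finset G) {h : G → ℝ} (hh : 0 ≤ h) :
    schurDensity 𝟙[A] h ≤ 𝔼 z, h z :=
  calc schurDensity 𝟙[A] h
      ≤ schurDensity 1 h :=
        schurDensity_mono_left (indicator_nonneg A) (indicator_le_one A) hh
    _ = 𝔼 z, h z := by
        simp [schurDensity, expect_comp_add_left]

lemma schurDensity_eq_zero_of_disjoint [DecidableEq G] {A B : Finset G}
    (hAB : Disjoint (A + A) B) : schurDensity 𝟙[A] 𝟙[B] = 0 := by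
  refine expect_eq_zero fun x _ ↦ expect_eq_zero fun y _ ↦ ?_
  by_cases hxy : x ∈ A ∧ y ∈ A
  · have : x + y ∉ B := disjoint_left.mp hAB (add_mem_add hxy.1 hxy.2)
    simp [this]
  · rcases not_and_or.mp hxy with hx | hy
    · simp [hx]
    · simp [hy]

/-- The elements of `G` with at most `ε * |G|` representations as a sum of two elements of `A`. -/
noncomputable def unpopularSums (ε : ℝ) (A : Finset G) : Finset G :=
  {z | 𝔼 x, 𝟙[A] x * 𝟙[A] (z - x) ≤ ε}

lemma schurDensity_unpopularSums_le {ε : ℝ} (hε : 0 ≤ ε) (A : Finset G) :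
    schurDensity 𝟙[A] 𝟙[unpopularSums ε A] ≤ ε := by
  rw [schurDensity_eq_expect_conv_mul]
  refine expect_le univ_nonempty fun z _ ↦ ?_
  by_cases hz : z ∈ unpopularSums ε A
  · rw [Set.indicator_of_mem (mem_coe.mpr hz), Pi.one_apply, mul_one]
    simpa only [unpopularSums, mem_filter_univ] using hz
  · simpa [hz] using hε

lemma mul_dens_sdiff_unpopularSums_le [DecidableEq G] (ε : ℝ) (A B : Finset G) :
    ε * (B \ unpopularSums ε A).dens ≤ schurDensity 𝟙[A] 𝟙[B] := by
  rw [schurDensity_eq_expect_conv_mul, ← expect_indicator_one, mul_expect]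
  refine expect_le_expect fun z _ ↦ ?_
  have hconv : 0 ≤ 𝔼 x, 𝟙[A] x * 𝟙[A] (z - x) :=
    expect_nonneg fun x _ ↦ mul_nonneg (indicator_nonneg A x) (indicator_nonneg A _)
  by_cases hz : z ∈ B \ unpopularSums ε A
  · have hε : ε < 𝔼 x, 𝟙[A] x * 𝟙[A] (z - x) := by
      simpa [unpopularSums] using (mem_sdiff.mp hz).2
    rw [Set.indicator_of_mem (mem_coe.mpr hz),
      Set.indicator_of_mem (mem_coe.mpr (mem_sdiff.mp hz).1)]
    simpa only [Pi.one_apply, mul_one] using hε.le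
  · rw [Set.indicator_of_notMem (by simpa only [mem_coe] using hz), mul_zero]
    exact mul_nonneg hconv (indicator_nonneg B z)

end SchurDensity

section Averaging

variable {G : Type*} [AddCommGroup G]

/-- The average of `f` over the cosets of the subgroup `W`. -/
noncomputable def cosetAverage (W : AddSubgroup G) [Fintype W] (f : G → ℝ) (x : G) : ℝ :=
  𝔼 w : W, f (x + w)

variable (W : AddSubgroup G) [Fintype W]

lemma cosetAverage_nonneg {f : G → ℝ} (hf : 0 ≤ f) : 0 ≤ cosetAverage W f :=
  fun _ ↦ expect_nonneg fun _ _ ↦ hf _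

lemma cosetAverage_add_of_mem (f : G → ℝ) (x : G) {w : G} (hw : w ∈ W) :
    cosetAverage W f (x + w) = cosetAverage W f x :=
  Fintype.expect_equiv (Equiv.addLeft ⟨w, hw⟩) _ _ fun v ↦ by simp [add_assoc]

variable [Fintype G]

lemma expect_mul_cosetAverage (g f : G → ℝ) (hg : ∀ x, ∀ w ∈ W, g (x + w) = g x) :
    𝔼 x, g x * cosetAverage W f x = 𝔼 x, g x * f x := by
  simp only [cosetAverage, mul_expect]
  rw [expect_comm]
  refine (expect_congr rfl fun w _ ↦ ?_).trans (Fintype.expect_const (ι := W) _)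
  rw [← expect_comp_add_right (fun x ↦ g x * f x) w]
  exact expect_congr rfl fun x _ ↦ by rw [hg x w w.2]

lemma dens_sdiff_le_of_cosetAverage [DecidableEq G] {ε : ℝ} (hε : 0 ≤ ε) (A : Finset G) :
    ((A \ ({x | ε ≤ cosetAverage W 𝟙[A] x} : Finset G)).dens : ℝ) ≤ ε := by
  set P : Finset G := {x | ε ≤ cosetAverage W 𝟙[A] x} with hP
  have hinv : ∀ x, ∀ w ∈ W, 𝟙[Pᶜ] (x + w) = 𝟙[Pᶜ] x := fun x w hw ↦ by
    simp only [Set.indicator_apply, mem_coe, hP, mem_compl, mem_filter_univ,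
      cosetAverage_add_of_mem W _ x hw, Pi.one_apply]
  calc ((A \ P).dens : ℝ)
      = 𝔼 x, 𝟙[Pᶜ] x * 𝟙[A] x := by
        rw [← expect_indicator_one]
        refine expect_congr rfl fun x _ ↦ ?_
        by_cases hA : x ∈ A <;> by_cases hPx : x ∈ P <;> simp [hA, hPx]
    _ = 𝔼 x, 𝟙[Pᶜ] x * cosetAverage W 𝟙[A] x := (expect_mul_cosetAverage W _ _ hinv).symm
    _ ≤ ε := by
        refine expect_le univ_nonempty fun x _ ↦ ?_
        by_cases hx : x ∈ P
        · simpa [hx] using hε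
        · have : cosetAverage W 𝟙[A] x < ε := by simpa [hP] using hx
          simpa [hx] using this.le

lemma sq_mul_schurDensity_le {ε : ℝ} (hε : 0 ≤ ε) {f h : G → ℝ} (hf : 0 ≤ f) (hh : 0 ≤ h) :
    ε ^ 2 * schurDensity 𝟙[({x | ε ≤ f x} : Finset G)] h ≤ schurDensity f h := by
  rw [← schurDensity_smul_left]
  refine schurDensity_mono_left (fun x ↦ mul_nonneg hε (indicator_nonneg _ x)) (fun x ↦ ?_) hh
  by_cases hx : ε ≤ f x
  · simp [hx]
  · simpa [hx] using hf x

end Averaging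

section Fourier

variable {n : ℕ}

lemma eq_zero_or_eq_one_zmod_two : ∀ a : ZMod 2, a = 0 ∨ a = 1 := by decide

/-- The character `x ↦ (-1) ^ (u ⬝ᵥ x)` of `F₂ⁿ`. -/
noncomputable def character (u : V n) : AddChar (V n) ℝ :=
  (AddChar.zmodChar 2 (neg_one_sq (R := ℝ))).compAddMonoidHom
    (dotProductBilin (ZMod 2) (ZMod 2) u).toAddMonoidHom

lemma character_apply (u x : V n) : character u x = if u ⬝ᵥ x = 0 then 1 else -1 := by
  have neg_one_pow_val : ∀ a : ZMod 2, (-1 : ℝ) ^ a.val = if a = 0 then 1 else -1 := by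
    intro a
    rcases eq_zero_or_eq_one_zmod_two a with rfl | rfl <;> simp [ZMod.val_one]
  exact neg_one_pow_val (u ⬝ᵥ x)

lemma character_comm (u x : V n) : character u x = character x u := by
  simp only [character_apply, dotProduct_comm u x]

lemma abs_character (u x : V n) : |character u x| = 1 := by
  rw [character_apply]
  split_ifs <;> simp

lemma character_mul_self (u x : V n) : character u x * character u x = 1 := by
  rw [← abs_mul_abs_self, abs_character, one_mul]

lemma character_eq_zero_iff (u : V n) : character u = 0 ↔ u = 0 := by
  rw [← dotProduct_eq_zero_iff, AddChar.eq_zero_iff]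
  refine forall_congr' fun x ↦ ?_
  rw [character_apply]
  split_ifs with h <;> norm_num [h]

lemma sum_character_apply (x : V n) :
    ∑ u, character u x = if x = 0 then (Fintype.card (V n) : ℝ) else 0 := by
  classical
  simp only [character_comm _ x, AddChar.sum_eq_ite, character_eq_zero_iff]

/-- The Walsh-Fourier coefficient of `f` at `u`. -/
noncomputable def fourier (f : V n → ℝ) (u : V n) : ℝ := 𝔼 x, f x * character u x

lemma fourier_zero (f : V n → ℝ) : fourier f 0 = 𝔼 x, f x := by
  simp [fourier, (character_eq_zero_iff 0).mpr rfl]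

lemma sum_fourier_mul_fourier (f g : V n → ℝ) :
    ∑ u, fourier f u * fourier g u = 𝔼 x, f x * g x := by
  have card_ne : (Fintype.card (V n) : ℝ) ≠ 0 := Nat.cast_ne_zero.mpr Fintype.card_ne_zero
  calc ∑ u, fourier f u * fourier g u
      = ∑ u, 𝔼 x, 𝔼 y, f x * g y * character u (x + y) := by
        simp only [fourier, expect_mul_expect, AddChar.map_add_eq_mul, mul_mul_mul_comm]
    _ = 𝔼 x, 𝔼 y, f x * g y * ∑ u, character u (x + y) := by
        simp only [mul_sum, expect_sum_comm]
    _ = 𝔼 x, f x * g x := by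
        refine expect_congr rfl fun x _ ↦ ?_
        simp only [sum_character_apply, add_eq_zero_iff_neg_eq, ZModModule.neg_eq_self, mul_ite,
          mul_zero, Fintype.expect_eq_sum_div_card, sum_ite_eq, mem_univ, if_true]
        field_simp

lemma sum_fourier_sq (f : V n → ℝ) : ∑ u, fourier f u ^ 2 = 𝔼 x, f x ^ 2 := by
  simpa only [sq] using sum_fourier_mul_fourier f f

lemma sum_fourier_sq_le_one {f : V n → ℝ} (hf : ∀ x, |f x| ≤ 1) : ∑ u, fourier f u ^ 2 ≤ 1 := by
  rw [sum_fourier_sq]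
  exact expect_le univ_nonempty fun x _ ↦ (sq_le_one_iff_abs_le_one _).mpr (hf x)

lemma sum_abs_fourier_mul_abs_fourier_le_one {f g : V n → ℝ} (hf : ∀ x, |f x| ≤ 1)
    (hg : ∀ x, |g x| ≤ 1) : ∑ u, |fourier f u| * |fourier g u| ≤ 1 := by
  have two_mul_le : 2 * ∑ u, |fourier f u| * |fourier g u|
      ≤ ∑ u, fourier f u ^ 2 + ∑ u, fourier g u ^ 2 := by
    rw [mul_sum, ← sum_add_distrib]
    refine sum_le_sum fun u _ ↦ ?_
    simpa only [mul_assoc, sq_abs] using two_mul_le_add_sq |fourier f u| |fourier g u|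
  linarith [sum_fourier_sq_le_one hf, sum_fourier_sq_le_one hg]

lemma schurDensity_character (f : V n → ℝ) (u : V n) :
    schurDensity f (character u) = fourier f u ^ 2 := by
  simp only [schurDensity, fourier, sq, expect_mul_expect, AddChar.map_add_eq_mul,
    mul_mul_mul_comm]

lemma schurDensity_eq_sum_fourier (f h : V n → ℝ) :
    schurDensity f h = ∑ u, fourier f u ^ 2 * fourier h u := by
  rw [schurDensity_eq_expect_conv_mul, ← sum_fourier_mul_fourier]
  refine sum_congr rfl fun u _ ↦ ?_
  rw [← schurDensity_character, schurDensity_eq_expect_conv_mul]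
  rfl

lemma fourier_cosetAverage (W : AddSubgroup (V n)) [Fintype W] (f : V n → ℝ) (u : V n) :
    fourier (cosetAverage W f) u = fourier f u * 𝔼 w : W, character u w := by
  rw [mul_expect]
  simp only [fourier, cosetAverage, expect_mul]
  rw [expect_comm]
  refine expect_congr rfl fun w _ ↦ ?_
  rw [← expect_comp_add_right (fun x ↦ f x * character u x * character u w) w]
  refine expect_congr rfl fun x _ ↦ ?_
  rw [AddChar.map_add_eq_mul, mul_assoc, mul_assoc, character_mul_self, mul_one]

lemma schurDensity_cosetAverage_le {W : AddSubgroup (V n)} [Fintype W] {f h : V n → ℝ} {τ : ℝ}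
    (hf : ∀ x, |f x| ≤ 1) (hh : ∀ x, |h x| ≤ 1) (hτ : 0 ≤ τ)
    (hW : ∀ u, τ < |fourier f u| → ∀ w ∈ W, character u w = 1) :
    schurDensity (cosetAverage W f) h ≤ schurDensity f h + τ := by
  set m : V n → ℝ := fun u ↦ 𝔼 w : W, character u w with hm
  have abs_m_le (u : V n) : |m u| ≤ 1 :=
    (abs_expect_le _ _).trans (expect_le univ_nonempty fun w _ ↦ (abs_character u w).le)
  have term_le (u : V n) : (fourier f u * m u) ^ 2 * fourier h u
      ≤ fourier f u ^ 2 * fourier h u + τ * (|fourier f u| * |fourier h u|) := by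
    rcases lt_or_ge τ |fourier f u| with hu | hu
    · have m_eq : m u = 1 := by simp [hm, hW u hu]
      rw [m_eq, mul_one]
      exact le_add_of_nonneg_right (by positivity)
    · have m_sq_le : m u ^ 2 ≤ 1 := (sq_le_one_iff_abs_le_one _).mpr (abs_m_le u)
      calc (fourier f u * m u) ^ 2 * fourier h u
          = fourier f u ^ 2 * fourier h u
              + |fourier f u| * (1 - m u ^ 2) * (|fourier f u| * -fourier h u) := by
            rw [← sq_abs (fourier f u), mul_pow, ← sq_abs (fourier f u)]; ring
        _ ≤ fourier f u ^ 2 * fourier h u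
              + |fourier f u| * (1 - m u ^ 2) * (|fourier f u| * |fourier h u|) := by
            gcongr
            exact neg_le_abs _
        _ ≤ fourier f u ^ 2 * fourier h u + τ * (|fourier f u| * |fourier h u|) := by
            gcongr
            exact (mul_le_of_le_one_right (abs_nonneg _) (sub_le_self _ (sq_nonneg _))).trans hu
  calc schurDensity (cosetAverage W f) h
      = ∑ u, (fourier f u * m u) ^ 2 * fourier h u := by
        simp only [schurDensity_eq_sum_fourier, fourier_cosetAverage, hm]
    _ ≤ ∑ u, (fourier f u ^ 2 * fourier h u + τ * (|fourier f u| * |fourier h u|)) :=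
        sum_le_sum fun u _ ↦ term_le u
    _ = schurDensity f h + τ * ∑ u, |fourier f u| * |fourier h u| := by
        rw [sum_add_distrib, ← mul_sum, schurDensity_eq_sum_fourier]
    _ ≤ schurDensity f h + τ := by
        gcongr
        exact mul_le_of_le_one_right hτ (sum_abs_fourier_mul_abs_fourier_le_one hf hh)

end Fourier

section Hyperplanes

variable {n : ℕ}

lemma exists_dotProduct_eq_one {u : V n} (hu : u ≠ 0) : ∃ x, u ⬝ᵥ x = 1 := by
  by_contra! h
  exact hu <| dotProduct_eq_zero_iff.mp fun x ↦
    (eq_zero_or_eq_one_zmod_two (u ⬝ᵥ x)).resolve_right (h x)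

lemma two_mul_card_filter_dotProduct_eq {T : Finset (V n)} {u x : V n} (hux : u ⬝ᵥ x = 1)
    (hT : ∀ y ∈ T, y + x ∈ T) (c : ZMod 2) : 2 * #{y ∈ T | u ⬝ᵥ y = c} = #T := by
  have add_one_eq_iff : ∀ a b : ZMod 2, a + 1 = b ↔ a ≠ b := by decide
  have add_add_cancel (y : V n) : y + x + x = y := by
    rw [add_assoc, ZModModule.add_self, add_zero]
  have card_eq : #{y ∈ T | u ⬝ᵥ y = c} = #{y ∈ T | ¬ u ⬝ᵥ y = c} := by
    refine card_nbij' (· + x) (· + x) (fun y hy ↦ ?_) (fun y hy ↦ ?_)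
      (fun y _ ↦ add_add_cancel y) fun y _ ↦ add_add_cancel y
    all_goals
      obtain ⟨hyT, hyc⟩ := mem_filter.mp hy
      simpa [hT y hyT, dotProduct_add, hux, add_one_eq_iff] using hyc
  rw [two_mul]
  nth_rw 2 [card_eq]
  exact card_filter_add_card_filter_not _

lemma two_mul_card_hyperplane {u : V n} (hu : u ≠ 0) (c : ZMod 2) :
    2 * #{y : V n | u ⬝ᵥ y = c} = 2 ^ n := by
  obtain ⟨x, hux⟩ := exists_dotProduct_eq_one hu
  rw [two_mul_card_filter_dotProduct_eq hux fun y _ ↦ mem_univ _]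
  simp

end Hyperplanes

section Regularity

variable {n k : ℕ}

/-- The sets `{x | M x ∈ D}` for a linear map `M : F₂ⁿ → F₂ᵏ` and a set `D ⊆ F₂ᵏ`, that is, the
sets which depend on at most `k` linear functionals. -/
def linearPreimages (n k : ℕ) : Finset (Finset (V n)) :=
  univ.image fun p : Matrix (Fin k) (Fin n) (ZMod 2) × Finset (V k) ↦
    ({x | p.1 *ᵥ x ∈ p.2} : Finset (V n))

lemma card_linearPreimages_le (n k : ℕ) : #(linearPreimages n k) ≤ 2 ^ (k * n + 2 ^ k) := by
  refine card_image_le.trans_eq ?_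
  have card_matrix : Fintype.card (Matrix (Fin k) (Fin n) (ZMod 2)) = 2 ^ (k * n) := by
    rw [← Fintype.card_congr Matrix.of]
    simp [← pow_mul, mul_comm]
  simp [card_matrix, pow_add]

lemma mem_linearPreimages_of_mulVec_eq {P : Finset (V n)} (M : Matrix (Fin k) (Fin n) (ZMod 2))
    (hP : ∀ x y, M *ᵥ x = M *ᵥ y → x ∈ P → y ∈ P) : P ∈ linearPreimages n k := by
  refine mem_image.mpr ⟨(M, P.image (M *ᵥ ·)), mem_univ _, ?_⟩
  ext y
  simp only [mem_filter_univ, mem_image]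
  exact ⟨fun ⟨x, hx, hxy⟩ ↦ hP x y hxy hx, fun hy ↦ ⟨y, hy, rfl⟩⟩

/-- The frequencies at which the Fourier coefficient of `f` exceeds `τ` in absolute value. -/
noncomputable def largeSpectrum (τ : ℝ) (f : V n → ℝ) : Finset (V n) := {u | τ < |fourier f u|}

lemma sq_mul_card_largeSpectrum_le_one {f : V n → ℝ} (hf : ∀ x, |f x| ≤ 1) {τ : ℝ} (hτ : 0 ≤ τ) :
    τ ^ 2 * #(largeSpectrum τ f) ≤ 1 :=
  calc τ ^ 2 * #(largeSpectrum τ f)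
      = ∑ u ∈ largeSpectrum τ f, τ ^ 2 := by rw [sum_const, nsmul_eq_mul, mul_comm]
    _ ≤ ∑ u ∈ largeSpectrum τ f, fourier f u ^ 2 := by
        refine sum_le_sum fun u hu ↦ ?_
        rw [← sq_abs (fourier f u)]
        exact pow_le_pow_left₀ hτ (mem_filter_univ _ |>.mp hu).le 2
    _ ≤ ∑ u, fourier f u ^ 2 := sum_le_univ_sum_of_nonneg fun u ↦ sq_nonneg _
    _ ≤ 1 := sum_fourier_sq_le_one hf

lemma exists_matrix_forall_mem_exists_row_eq {S : Finset (V n)} (hS : #S ≤ k) :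
    ∃ M : Matrix (Fin k) (Fin n) (ZMod 2), ∀ u ∈ S, ∃ i, M.row i = u := by
  obtain ⟨e⟩ : Nonempty (S ↪ Fin k) := Function.Embedding.nonempty_of_card_le (by simpa using hS)
  exact ⟨.of (Function.extend e (↑) 0), fun u hu ↦ ⟨e ⟨u, hu⟩, e.injective.extend_apply _ _ _⟩⟩

lemma exists_matrix_forall_character_eq_one {f : V n → ℝ} (hf : ∀ x, |f x| ≤ 1) {τ : ℝ}
    (hτ : 0 < τ) : ∃ M : Matrix (Fin ⌊(τ ^ 2)⁻¹⌋₊) (Fin n) (ZMod 2),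
      ∀ u, τ < |fourier f u| → ∀ w, M *ᵥ w = 0 → character u w = 1 := by
  have card_le : #(largeSpectrum τ f) ≤ ⌊(τ ^ 2)⁻¹⌋₊ := by
    refine Nat.le_floor ?_
    rw [← one_div, le_div_iff₀' (by positivity)]
    exact sq_mul_card_largeSpectrum_le_one hf hτ.le
  obtain ⟨M, hM⟩ := exists_matrix_forall_mem_exists_row_eq card_le
  refine ⟨M, fun u hu w hw ↦ ?_⟩
  obtain ⟨i, rfl⟩ := hM u ((mem_filter_univ u).mpr hu)
  have row_dotProduct : M.row i ⬝ᵥ w = 0 := congr_fun hw i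
  rw [character_apply, if_pos row_dotProduct]

theorem exists_linearPreimages_forall_disjoint {ε₁ ε₂ : ℝ} (hε₁ : 0 < ε₁) (hε₂ : 0 < ε₂) :
    ∃ k, ∀ n, ∀ A B : Finset (V n), Disjoint (A + A) B →
      ∃ P ∈ linearPreimages n k, ((A \ P).dens : ℝ) ≤ ε₁ ∧ schurDensity 𝟙[P] 𝟙[B] ≤ ε₂ := by
  classical
  have hτ : 0 < ε₁ ^ 2 * ε₂ := by positivity
  refine ⟨⌊((ε₁ ^ 2 * ε₂) ^ 2)⁻¹⌋₊, fun n A B hAB ↦ ?_⟩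
  obtain ⟨M, hM⟩ := exists_matrix_forall_character_eq_one (abs_indicator_le_one A) hτ
  let W : AddSubgroup (V n) := M.mulVecLin.toAddMonoidHom.ker
  refine ⟨({x | ε₁ ≤ cosetAverage W 𝟙[A] x} : Finset (V n)),
    mem_linearPreimages_of_mulVec_eq M fun x y hxy hx ↦ ?_,
    dens_sdiff_le_of_cosetAverage W hε₁.le A, ?_⟩
  · have sub_mem : y - x ∈ W := by
      change M *ᵥ (y - x) = 0
      rw [Matrix.mulVec_sub, hxy, sub_self]
    rw [mem_filter_univ] at hx ⊢
    rwa [← add_sub_cancel x y, cosetAverage_add_of_mem W _ x sub_mem]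
  · have avg_nonneg := cosetAverage_nonneg W (indicator_nonneg A)
    have : ε₁ ^ 2 * schurDensity 𝟙[({x | ε₁ ≤ cosetAverage W 𝟙[A] x} : Finset (V n))] 𝟙[B]
        ≤ ε₁ ^ 2 * ε₂ :=
      calc _ ≤ schurDensity (cosetAverage W 𝟙[A]) 𝟙[B] :=
            sq_mul_schurDensity_le hε₁.le avg_nonneg (indicator_nonneg B)
        _ ≤ schurDensity 𝟙[A] 𝟙[B] + ε₁ ^ 2 * ε₂ :=
            schurDensity_cosetAverage_le (abs_indicator_le_one A) (abs_indicator_le_one B) hτ.le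
              hM
        _ = ε₁ ^ 2 * ε₂ := by rw [schurDensity_eq_zero_of_disjoint hAB, zero_add]
    exact le_of_mul_le_mul_left this (by positivity)

end Regularity

section Stability

variable {n : ℕ}

lemma schurDensity_ge_of_le_fourier {f h : V n → ℝ} {η : ℝ} (hη : ∀ u ≠ 0, -η ≤ fourier h u) :
    (𝔼 x, f x) ^ 2 * 𝔼 x, h x - η * (𝔼 x, f x ^ 2 - (𝔼 x, f x) ^ 2) ≤ schurDensity f h := by
  have sum_ne_zero : ∑ u ∈ univ.erase 0, fourier f u ^ 2 = 𝔼 x, f x ^ 2 - (𝔼 x, f x) ^ 2 := by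
    rw [eq_sub_iff_add_eq, ← sum_fourier_sq, ← fourier_zero]
    exact sum_erase_add _ _ (mem_univ 0)
  rw [schurDensity_eq_sum_fourier, ← sum_ne_zero, ← fourier_zero f, ← fourier_zero h,
    ← add_sum_erase _ _ (mem_univ (0 : V n)), sub_eq_add_neg, ← neg_mul,
    mul_comm (-η), sum_mul]
  gcongr with u hu
  exact hη u (ne_of_mem_erase hu)

lemma dens_filter_dotProduct_eq_zero (A : Finset (V n)) (u : V n) :
    (({x ∈ A | u ⬝ᵥ x = 0} : Finset (V n)).dens : ℝ) = (A.dens + fourier 𝟙[A] u) / 2 := by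
  rw [← expect_indicator_one, ← expect_indicator_one, fourier, ← expect_add_distrib, expect_div]
  refine expect_congr rfl fun x _ ↦ ?_
  by_cases hA : x ∈ A <;> by_cases hx : u ⬝ᵥ x = 0 <;> simp [hA, hx, character_apply]

lemma dens_filter_dotProduct_eq_one (A : Finset (V n)) (u : V n) :
    (({x ∈ A | u ⬝ᵥ x = 1} : Finset (V n)).dens : ℝ) = (A.dens - fourier 𝟙[A] u) / 2 := by
  rw [← expect_indicator_one, ← expect_indicator_one, fourier, ← expect_sub_distrib, expect_div]
  refine expect_congr rfl fun x _ ↦ ?_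
  rcases eq_zero_or_eq_one_zmod_two (u ⬝ᵥ x) with hx | hx <;> by_cases hA : x ∈ A <;>
    simp [hA, hx, character_apply]

lemma fourier_indicator_univ {u : V n} (hu : u ≠ 0) :
    fourier 𝟙[(univ : Finset (V n))] u = 0 := by
  classical
  simp [fourier, Fintype.expect_eq_sum_div_card, AddChar.sum_eq_ite, character_eq_zero_iff, hu]

lemma schurDensity_indicator_dotProduct_eq_one (f : V n → ℝ) (u : V n) :
    schurDensity f 𝟙[({x | u ⬝ᵥ x = 1} : Finset (V n))]
      = ((𝔼 x, f x) ^ 2 - fourier f u ^ 2) / 2 := by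
  have indicator_eq (z : V n) :
      𝟙[({x | u ⬝ᵥ x = 1} : Finset (V n))] z = (1 - character u z) / 2 := by
    rcases eq_zero_or_eq_one_zmod_two (u ⬝ᵥ z) with hz | hz <;> simp [hz, character_apply]
  rw [← schurDensity_character, sq, expect_mul_expect]
  simp only [schurDensity, indicator_eq, ← expect_sub_distrib, expect_div]
  exact expect_congr rfl fun x _ ↦ expect_congr rfl fun y _ ↦ by ring

variable {A Q : Finset (V n)} {δ : ℝ}

lemma exists_fourier_lt_of_schurDensity_le (hδ : 0 < δ) (hδ' : δ ≤ 1 / 6)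
    (hA : 1 / 2 - δ ≤ A.dens) (hQ : 1 / 2 - δ ≤ Q.dens)
    (hAQ : schurDensity 𝟙[A] 𝟙[Q] ≤ δ / 4) :
    ∃ u ≠ 0, fourier 𝟙[Q] u < -(1 / 2 - 5 * δ) := by
  by_contra! h
  have indicator_sq (x : V n) : 𝟙[A] x ^ 2 = 𝟙[A] x := by
    by_cases hx : x ∈ A <;> simp [hx]
  have hoffman := schurDensity_ge_of_le_fourier (f := 𝟙[A]) h
  simp only [indicator_sq, expect_indicator_one] at hoffman
  set α : ℝ := (A.dens : ℝ)
  set β : ℝ := (Q.dens : ℝ)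
  have third_le : 1 / 3 ≤ α := by linarith
  have le_sub : δ ≤ α * β - (1 / 2 - 5 * δ) * (1 - α) := by nlinarith
  have third_mul_le : 1 / 3 * δ ≤ α * (α * β - (1 / 2 - 5 * δ) * (1 - α)) := by gcongr
  linarith

theorem exists_dens_filter_dotProduct_le (hδ : 0 < δ) (hδ' : δ ≤ 1 / 6)
    (hA : 1 / 2 - δ ≤ A.dens) (hQ : 1 / 2 - δ ≤ Q.dens)
    (hAQ : schurDensity 𝟙[A] 𝟙[Q] ≤ δ / 4) :
    ∃ u ≠ 0, ∃ c, (({x ∈ A | u ⬝ᵥ x = c} : Finset (V n)).dens : ℝ) ≤ 10 * δ := by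
  classical
  obtain ⟨u, hu, hQu⟩ := exists_fourier_lt_of_schurDensity_le hδ hδ' hA hQ hAQ
  set H : Finset (V n) := {x | u ⬝ᵥ x = 1}
  set p : ℝ := (({x ∈ A | u ⬝ᵥ x = 0} : Finset (V n)).dens : ℝ) with hp
  set q : ℝ := (({x ∈ A | u ⬝ᵥ x = 1} : Finset (V n)).dens : ℝ) with hq
  have dens_H_sdiff_le : ((H \ Q).dens : ℝ) ≤ 3 * δ := by
    have dens_H : (H.dens : ℝ) = 1 / 2 := by
      rw [dens_filter_dotProduct_eq_one, fourier_indicator_univ hu, dens_univ]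
      simp
    have dens_inter : ((H ∩ Q).dens : ℝ) = (Q.dens - fourier 𝟙[Q] u) / 2 := by
      rw [← dens_filter_dotProduct_eq_one, filter_inter, univ_inter]
    have dens_add : ((H \ Q).dens : ℝ) + (H ∩ Q).dens = H.dens :=
      mod_cast dens_sdiff_add_dens_inter H Q
    linarith
  have mul_le : 2 * (p * q) ≤ δ / 4 + 3 * δ :=
    calc 2 * (p * q) = schurDensity 𝟙[A] 𝟙[H] := by
          rw [schurDensity_indicator_dotProduct_eq_one, expect_indicator_one, hp, hq,
            dens_filter_dotProduct_eq_zero, dens_filter_dotProduct_eq_one]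
          ring
      _ ≤ schurDensity 𝟙[A] (𝟙[Q] + 𝟙[H \ Q]) := by
          refine schurDensity_mono_right (indicator_nonneg A) fun x ↦ ?_
          by_cases hxH : x ∈ H <;> by_cases hxQ : x ∈ Q <;> simp [hxH, hxQ]
      _ ≤ δ / 4 + 3 * δ := by
          rw [schurDensity_add_right]
          refine add_le_add hAQ ((schurDensity_indicator_le_expect A (indicator_nonneg _)).trans ?_)
          rwa [expect_indicator_one]
  have add_eq : p + q = A.dens := by
    rw [hp, hq, dens_filter_dotProduct_eq_zero, dens_filter_dotProduct_eq_one]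
    ring
  refine ⟨u, hu, ?_⟩
  by_contra! h
  have hp_lt : 10 * δ < p := h 0
  have hq_lt : 10 * δ < q := h 1
  have third_le : 1 / 3 ≤ p + q := by linarith
  have mul_third_le : 10 * δ * (1 / 3) ≤ 10 * δ * (p + q) := by gcongr
  have mul_p_lt : 10 * δ * p < q * p := by gcongr; linarith
  have mul_q_lt : 10 * δ * q < p * q := by gcongr; linarith
  linarith

end Stability

section Counting

lemma card_le_card_mul_of_forall_exists_mem {ι β : Type*} {F : Finset β} {s : Finset ι}
    {t : ι → Finset β} {b : ℝ} (hF : ∀ a ∈ F, ∃ i ∈ s, a ∈ t i) (ht : ∀ i ∈ s, #(t i) ≤ b) :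
    #F ≤ #s * b := by
  classical
  have subset_biUnion : F ⊆ s.biUnion t := fun a ha ↦ mem_biUnion.mpr (hF a ha)
  calc (#F : ℝ) ≤ ∑ i ∈ s, (#(t i) : ℝ) :=
        mod_cast (card_le_card subset_biUnion).trans card_biUnion_le
    _ ≤ #s * b := by
        rw [← nsmul_eq_mul]
        exact sum_le_card_nsmul s _ b ht

variable {α : Type*} [Fintype α]

lemma card_filter_dens_le_mul_rpow_le {x : ℝ} (hx₀ : 0 < x) (hx₁ : x ≤ 1) (c : ℝ) :
    #{S : Finset α | (S.dens : ℝ) ≤ c} * x ^ (c * Fintype.card α) ≤ (x + 1) ^ Fintype.card α :=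
  calc #{S : Finset α | (S.dens : ℝ) ≤ c} * x ^ (c * Fintype.card α)
      = ∑ S : Finset α with (S.dens : ℝ) ≤ c, x ^ (c * Fintype.card α) := by
        rw [sum_const, nsmul_eq_mul]
    _ ≤ ∑ S : Finset α with (S.dens : ℝ) ≤ c, x ^ #S := by
        refine sum_le_sum fun S hS ↦ ?_
        rw [← Real.rpow_natCast x, ← nnratCast_dens_mul_natCast_card]
        refine Real.rpow_le_rpow_of_exponent_ge hx₀ hx₁ ?_
        gcongr
        exact (mem_filter_univ S).mp hS
    _ ≤ ∑ S : Finset α, x ^ #S := sum_le_univ_sum_of_nonneg fun S ↦ by positivity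
    _ = (x + 1) ^ Fintype.card α := by
        simpa only [one_pow, mul_one] using Fintype.sum_pow_mul_eq_add_pow α x 1

lemma exists_forall_card_filter_dens_le {γ : ℝ} (hγ : 0 < γ) :
    ∃ c, 0 < c ∧ ∀ t ≤ c, ∀ (α : Type*) [Fintype α],
      (#{S : Finset α | (S.dens : ℝ) ≤ t} : ℝ) ≤ 2 ^ (γ * Fintype.card α) := by
  have one_lt_rpow : (1 : ℝ) < 2 ^ (γ / 2) := Real.one_lt_rpow one_lt_two (by positivity)
  obtain ⟨x, hx₀, hx⟩ : ∃ x, 0 < x ∧ x < min (2 ^ (γ / 2) - 1) 1 :=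
    exists_between (lt_min (sub_pos.mpr one_lt_rpow) one_pos)
  obtain ⟨hxγ, hx₁⟩ := lt_min_iff.mp hx
  have log_neg : Real.logb 2 x < 0 := Real.logb_neg one_lt_two hx₀ hx₁
  set c : ℝ := -(γ / 2) / Real.logb 2 x with hc
  have x_rpow : x ^ c = 2 ^ (-(γ / 2)) := by
    nth_rw 1 [← Real.rpow_logb two_pos (by norm_num) hx₀]
    rw [← Real.rpow_mul two_pos.le, hc, mul_div_cancel₀ _ log_neg.ne]
  refine ⟨c, div_pos_of_neg_of_neg (by linarith) log_neg, fun t ht α _ ↦ ?_⟩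
  have generating := card_filter_dens_le_mul_rpow_le (α := α) hx₀ hx₁.le c
  rw [Real.rpow_mul hx₀.le, x_rpow, Real.rpow_natCast, ← le_div_iff₀ (by positivity),
    ← div_pow] at generating
  have card_mono : #{S : Finset α | (S.dens : ℝ) ≤ t} ≤ #{S : Finset α | (S.dens : ℝ) ≤ c} :=
    card_le_card (monotone_filter_right _ fun S _ hS ↦ hS.trans ht)
  refine (Nat.cast_le.mpr card_mono).trans (generating.trans ?_)
  rw [Real.rpow_mul two_pos.le, Real.rpow_natCast]
  gcongr
  rw [div_le_iff₀ (by positivity), ← Real.rpow_add two_pos, ← sub_eq_add_neg, sub_half]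
  linarith

variable [DecidableEq α]

lemma card_filter_inter_sdiff_le (P : Finset α) (p q : Finset α → Prop) [DecidablePred p]
    [DecidablePred q] :
    #{A : Finset α | p (A ∩ P) ∧ q (A \ P)}
      ≤ #{S ∈ P.powerset | p S} * #{S ∈ Pᶜ.powerset | q S} := by
  rw [← card_product]
  refine card_le_card_of_injOn (fun A ↦ (A ∩ P, A \ P)) (fun A hA ↦ ?_) fun A _ B _ hAB ↦ ?_
  · obtain ⟨hp, hq⟩ := (mem_filter_univ A).mp hA
    simp [hp, hq, inter_subset_right, subset_compl_iff_disjoint_right, sdiff_disjoint]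
  · obtain ⟨inter_eq, sdiff_eq⟩ := Prod.mk.inj hAB
    rw [← sdiff_union_inter A P, ← sdiff_union_inter B P, inter_eq, sdiff_eq]

lemma card_filter_forall_notMem_le_three_pow (P : Finset α) (σ : α → α) :
    #{S ∈ (P ∪ P.image σ).powerset | ∀ y ∈ S, σ y ∉ S} ≤ 3 ^ #P := by
  let patterns : Finset (P → Bool × Bool) := Fintype.piFinset fun _ ↦ {(true, true)}ᶜ
  have card_patterns : #patterns = 3 ^ #P := by
    simp [patterns, Fintype.card_piFinset, card_compl]
  rw [← card_patterns]
  refine card_le_card_of_injOn (fun S y ↦ (decide (y.1 ∈ S), decide (σ y ∈ S)))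
    (fun S hS ↦ ?_) fun S hS T hT hST ↦ ?_
  · simpa [patterns] using fun y _ hy ↦ (mem_filter.mp hS).2 y hy
  · have mem_iff (y) (hy : y ∈ P) : (y ∈ S ↔ y ∈ T) ∧ (σ y ∈ S ↔ σ y ∈ T) := by
      simpa using congr_fun hST ⟨y, hy⟩
    have hS_sub := mem_powerset.mp (mem_filter.mp hS).1
    have hT_sub := mem_powerset.mp (mem_filter.mp hT).1
    have mem_iff_of_mem_union (z) (hz : z ∈ P ∪ P.image σ) : z ∈ S ↔ z ∈ T := by
      rcases mem_union.mp hz with hz | hz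
      · exact (mem_iff z hz).1
      · obtain ⟨y, hy, rfl⟩ := mem_image.mp hz
        exact (mem_iff y hy).2
    ext z
    exact ⟨fun hz ↦ (mem_iff_of_mem_union z (hS_sub hz)).mp hz,
      fun hz ↦ (mem_iff_of_mem_union z (hT_sub hz)).mpr hz⟩

/-- The sets with at most `ε * |α|` elements outside some member of `ℱ` of density at most `ρ`. -/
noncomputable def nearlyWithin (ℱ : Finset (Finset α)) (ρ ε : ℝ) : Finset (Finset α) :=
  {A | ∃ P ∈ ℱ, (P.dens : ℝ) ≤ ρ ∧ ((A \ P).dens : ℝ) ≤ ε}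

lemma card_filter_dens_sdiff_le (P : Finset α) (ε : ℝ) :
    #{A : Finset α | ((A \ P).dens : ℝ) ≤ ε} ≤ 2 ^ #P * #{S : Finset α | (S.dens : ℝ) ≤ ε} :=
  calc #{A : Finset α | ((A \ P).dens : ℝ) ≤ ε}
      ≤ #P.powerset * #{S ∈ Pᶜ.powerset | (S.dens : ℝ) ≤ ε} := by
        simpa only [true_and, filter_true] using
          card_filter_inter_sdiff_le P (fun _ ↦ True) fun S ↦ (S.dens : ℝ) ≤ ε
    _ ≤ 2 ^ #P * #{S : Finset α | (S.dens : ℝ) ≤ ε} := by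
        rw [card_powerset]
        gcongr
        exact subset_univ _

lemma card_nearlyWithin_le (ℱ : Finset (Finset α)) (ρ ε : ℝ) :
    (#(nearlyWithin ℱ ρ ε) : ℝ)
      ≤ #ℱ * (2 ^ (ρ * Fintype.card α) * #{S : Finset α | (S.dens : ℝ) ≤ ε}) := by
  have card_le (P) (hP : P ∈ ({P ∈ ℱ | (P.dens : ℝ) ≤ ρ} : Finset (Finset α))) :
      (#{A : Finset α | ((A \ P).dens : ℝ) ≤ ε} : ℝ)
        ≤ 2 ^ (ρ * Fintype.card α) * #{S : Finset α | (S.dens : ℝ) ≤ ε} := by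
    have two_pow_card_le : (2 : ℝ) ^ #P ≤ 2 ^ (ρ * Fintype.card α) := by
      rw [← Real.rpow_natCast, ← nnratCast_dens_mul_natCast_card]
      gcongr
      · exact one_le_two
      · exact (mem_filter.mp hP).2
    calc (#{A : Finset α | ((A \ P).dens : ℝ) ≤ ε} : ℝ)
        ≤ 2 ^ #P * #{S : Finset α | (S.dens : ℝ) ≤ ε} := mod_cast card_filter_dens_sdiff_le P ε
      _ ≤ _ := by gcongr
  refine (card_le_card_mul_of_forall_exists_mem (fun A hA ↦ ?_) card_le).trans ?_
  · simpa [nearlyWithin, and_assoc] using hA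
  · gcongr
    exact filter_subset _ _

lemma card_nearlyWithin_le_rpow {ℱ : Finset (Finset α)} {ρ ε γ₁ γ₂ : ℝ}
    (hℱ : #ℱ ≤ (2 : ℝ) ^ (γ₁ * Fintype.card α))
    (hε : #{S : Finset α | (S.dens : ℝ) ≤ ε} ≤ (2 : ℝ) ^ (γ₂ * Fintype.card α)) :
    #(nearlyWithin ℱ ρ ε) ≤ (2 : ℝ) ^ ((ρ + γ₁ + γ₂) * Fintype.card α) :=
  calc (#(nearlyWithin ℱ ρ ε) : ℝ)
      ≤ #ℱ * (2 ^ (ρ * Fintype.card α) * #{S : Finset α | (S.dens : ℝ) ≤ ε}) :=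
        card_nearlyWithin_le ℱ ρ ε
    _ ≤ 2 ^ (γ₁ * Fintype.card α) * (2 ^ (ρ * Fintype.card α) * 2 ^ (γ₂ * Fintype.card α)) := by
        gcongr
    _ = (2 : ℝ) ^ ((ρ + γ₁ + γ₂) * Fintype.card α) := by
        rw [← Real.rpow_add two_pos, ← Real.rpow_add two_pos]
        ring_nf

end Counting

section Cover

variable {n : ℕ}

/-- The sets containing a hyperplane through the origin. -/
def hyperplaneSupersets (n : ℕ) : Finset (Finset (V n)) :=
  {S | ∃ u ≠ 0, ∀ x, u ⬝ᵥ x = 0 → x ∈ S}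

lemma card_hyperplaneSupersets_le (n : ℕ) :
    #(hyperplaneSupersets n) ≤ 2 ^ n * (2 : ℝ) ^ ((2 : ℝ) ^ n / 2) := by
  let hyperplane (u : V n) : Finset (V n) := {x | u ⬝ᵥ x = 0}
  have card_Icc_le (u : V n) (hu : u ∈ univ.erase 0) :
      (#(Icc (hyperplane u) univ) : ℝ) ≤ 2 ^ ((2 : ℝ) ^ n / 2) := by
    have card_hyperplane : 2 * #(hyperplane u) = 2 ^ n :=
      two_mul_card_hyperplane (ne_of_mem_erase hu) 0
    have card_compl : ((2 ^ n - #(hyperplane u) : ℕ) : ℝ) = 2 ^ n / 2 := by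
      rw [← card_hyperplane, two_mul, Nat.add_sub_cancel]
      rify at card_hyperplane
      linarith
    rw [card_Icc_finset (subset_univ _), ← card_compl, Real.rpow_natCast]
    simp
  refine (card_le_card_mul_of_forall_exists_mem (fun S hS ↦ ?_) card_Icc_le).trans ?_
  · obtain ⟨u, hu, hS⟩ := (mem_filter_univ S).mp hS
    exact ⟨u, by simpa using hu, by simpa [subset_iff, hyperplane] using hS⟩
  · gcongr
    exact_mod_cast card_le_univ (univ.erase (0 : V n)) |>.trans_eq (by simp)

/-- The sets with at most `t * 2 ^ n` elements in the hyperplane orthogonal to `u`, whose sumset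
misses `x`. -/
noncomputable def thinSetsMissing {n : ℕ} (u x : V n) (t : ℝ) : Finset (Finset (V n)) :=
  {A | (({y ∈ A | u ⬝ᵥ y = 0} : Finset (V n)).dens : ℝ) ≤ t ∧ x ∉ A + A}

/-- The sets with at most `t * 2 ^ n` elements in some hyperplane through the origin, whose sumset
misses a nonzero element of that hyperplane. -/
noncomputable def thinSets (n : ℕ) (t : ℝ) : Finset (Finset (V n)) :=
  {A | ∃ u ≠ 0, ∃ x ≠ 0, u ⬝ᵥ x = 0 ∧ A ∈ thinSetsMissing u x t}

lemma four_mul_card_filter_dotProduct_eq_and {u v x : V n} (hu : u ≠ 0) (hux : u ⬝ᵥ x = 0)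
    (hvx : v ⬝ᵥ x = 1) (a b : ZMod 2) : 4 * #{y : V n | u ⬝ᵥ y = a ∧ v ⬝ᵥ y = b} = 2 ^ n := by
  have card_eq : 2 * #{y : V n | u ⬝ᵥ y = a ∧ v ⬝ᵥ y = b} = #{y : V n | u ⬝ᵥ y = a} := by
    rw [← filter_filter]
    refine two_mul_card_filter_dotProduct_eq hvx (fun y hy ↦ ?_) b
    simpa [dotProduct_add, hux] using hy
  rw [← two_mul_card_hyperplane hu a, ← card_eq]
  ring

lemma card_filter_compl_hyperplane_le {u x : V n} (hu : u ≠ 0) (hx : x ≠ 0) (hux : u ⬝ᵥ x = 0) :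
    #{S ∈ ({y | u ⬝ᵥ y = 0} : Finset (V n))ᶜ.powerset | ∀ y ∈ S, y + x ∉ S}
      ≤ (3 : ℝ) ^ ((2 : ℝ) ^ n / 4) := by
  obtain ⟨v, hv⟩ := exists_dotProduct_eq_one hx
  rw [dotProduct_comm] at hv
  -- `P` represents the cosets of `{0, x}` outside the hyperplane.
  let P : Finset (V n) := {y | u ⬝ᵥ y = 1 ∧ v ⬝ᵥ y = 0}
  have card_P : (#P : ℝ) = 2 ^ n / 4 := by
    have := four_mul_card_filter_dotProduct_eq_and hu hux hv 1 0
    rify at this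
    linarith
  have compl_subset : ({y | u ⬝ᵥ y = 0} : Finset (V n))ᶜ ⊆ P ∪ P.image (· + x) := by
    intro y hy
    have huy : u ⬝ᵥ y = 1 := (eq_zero_or_eq_one_zmod_two _).resolve_left (by simpa using hy)
    rcases eq_zero_or_eq_one_zmod_two (v ⬝ᵥ y) with hvy | hvy
    · exact mem_union_left _ (by simp [P, huy, hvy])
    · refine mem_union_right _ (mem_image.mpr ⟨y + x, ?_, ?_⟩)
      · simp [P, dotProduct_add, huy, hvy, hux, hv, CharTwo.add_self_eq_zero]
      · rw [add_assoc, ZModModule.add_self, add_zero]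
  have card_le : #{S ∈ ({y | u ⬝ᵥ y = 0} : Finset (V n))ᶜ.powerset | ∀ y ∈ S, y + x ∉ S}
      ≤ 3 ^ #P := by
    refine le_trans ?_ (card_filter_forall_notMem_le_three_pow P (· + x))
    gcongr
    exact powerset_mono.mpr compl_subset
  rw [← card_P, Real.rpow_natCast]
  exact_mod_cast card_le

lemma card_thinSetsMissing_le {u x : V n} (hu : u ≠ 0) (hx : x ≠ 0) (hux : u ⬝ᵥ x = 0) (t : ℝ) :
    #(thinSetsMissing u x t)
      ≤ #{S : Finset (V n) | (S.dens : ℝ) ≤ t} * (3 : ℝ) ^ ((2 : ℝ) ^ n / 4) := by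
  let H : Finset (V n) := {y | u ⬝ᵥ y = 0}
  have notMem_of_mem (A : Finset (V n)) (hA : x ∉ A + A) : ∀ y ∈ A \ H, y + x ∉ A \ H :=
    fun y hy hyx ↦ hA <| mem_add.mpr ⟨y, (mem_sdiff.mp hy).1, y + x, (mem_sdiff.mp hyx).1,
      by rw [← add_assoc, ZModModule.add_self, zero_add]⟩
  have card_le : #(thinSetsMissing u x t)
      ≤ #{S ∈ H.powerset | (S.dens : ℝ) ≤ t} * #{S ∈ Hᶜ.powerset | ∀ y ∈ S, y + x ∉ S} := by
    refine (card_le_card fun A hA ↦ ?_).trans (card_filter_inter_sdiff_le H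
      (fun S ↦ (S.dens : ℝ) ≤ t) fun S ↦ ∀ y ∈ S, y + x ∉ S)
    obtain ⟨dens_le, hA⟩ := (mem_filter_univ A).mp hA
    refine (mem_filter_univ A).mpr ⟨?_, notMem_of_mem A hA⟩
    rwa [inter_filter, inter_univ]
  calc (#(thinSetsMissing u x t) : ℝ)
      ≤ #{S ∈ H.powerset | (S.dens : ℝ) ≤ t} * #{S ∈ Hᶜ.powerset | ∀ y ∈ S, y + x ∉ S} :=
        mod_cast card_le
    _ ≤ #{S : Finset (V n) | (S.dens : ℝ) ≤ t} * (3 : ℝ) ^ ((2 : ℝ) ^ n / 4) := by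
        gcongr
        · exact subset_univ _
        · exact card_filter_compl_hyperplane_le hu hx hux

lemma card_thinSets_le (n : ℕ) (t : ℝ) :
    #(thinSets n t)
      ≤ 4 ^ n * (#{S : Finset (V n) | (S.dens : ℝ) ≤ t} * (3 : ℝ) ^ ((2 : ℝ) ^ n / 4)) := by
  let pairs : Finset (V n × V n) := {p | p.1 ≠ 0 ∧ p.2 ≠ 0 ∧ p.1 ⬝ᵥ p.2 = 0}
  have card_pairs : #pairs ≤ 4 ^ n := by
    refine (card_le_univ pairs).trans_eq ?_
    simp [← mul_pow]
  refine (card_le_card_mul_of_forall_exists_mem (s := pairs)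
    (t := fun p ↦ thinSetsMissing p.1 p.2 t) (fun A hA ↦ ?_) fun p hp ↦ ?_).trans
    (mul_le_mul_of_nonneg_right (mod_cast card_pairs) (by positivity))
  · obtain ⟨u, hu, x, hx, hux, hA⟩ := (mem_filter_univ A).mp hA
    exact ⟨(u, x), by simp [pairs, hu, hx, hux], hA⟩
  · obtain ⟨hu, hx, hux⟩ := (mem_filter_univ p).mp hp
    exact card_thinSetsMissing_le hu hx hux t

lemma exists_add_self_eq_and_dens_filter_eq (A : Finset (V n)) {u : V n} (hu : u ≠ 0)
    (c : ZMod 2) : ∃ A' : Finset (V n), A' + A' = A + A ∧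
      ({y ∈ A' | u ⬝ᵥ y = 0} : Finset (V n)).dens = ({y ∈ A | u ⬝ᵥ y = c} : Finset (V n)).dens := by
  obtain ⟨x, hux⟩ := exists_dotProduct_eq_one hu
  refine ⟨{c • x} + A, ?_, ?_⟩
  · rw [add_add_add_comm, singleton_add_singleton, ZModModule.add_self, singleton_zero, zero_add]
  · have filter_eq : ({y ∈ {c • x} + A | u ⬝ᵥ y = 0} : Finset (V n))
        = (c • x) +ᵥ ({y ∈ A | u ⬝ᵥ y = c} : Finset (V n)) := by
      rw [singleton_add, vadd_finset_def, vadd_finset_def, filter_image]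
      simp [dotProduct_add, hux, CharTwo.add_eq_zero, eq_comm]
    rw [filter_eq, dens_vadd_finset]

lemma add_self_mem_hyperplaneSupersets_or_exists_thinSets {A : Finset (V n)} (hA : A.Nonempty)
    {u : V n} (hu : u ≠ 0) {c : ZMod 2} {t : ℝ}
    (ht : (({y ∈ A | u ⬝ᵥ y = c} : Finset (V n)).dens : ℝ) ≤ t) :
    A + A ∈ hyperplaneSupersets n ∨ ∃ A' ∈ thinSets n t, A' + A' = A + A := by
  obtain ⟨A', add_eq, dens_eq⟩ := exists_add_self_eq_and_dens_filter_eq A hu c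
  by_cases h : ∀ x, u ⬝ᵥ x = 0 → x ∈ A + A
  · exact .inl ((mem_filter_univ _).mpr ⟨u, hu, h⟩)
  · push Not at h
    obtain ⟨x, hux, hx⟩ := h
    have x_ne_zero : x ≠ 0 := by
      rintro rfl
      obtain ⟨a, ha⟩ := hA
      exact hx (ZModModule.add_self a ▸ add_mem_add ha ha)
    have mem_missing : A' ∈ thinSetsMissing u x t :=
      (mem_filter_univ A').mpr ⟨dens_eq ▸ ht, add_eq ▸ hx⟩
    exact .inr ⟨A', (mem_filter_univ A').mpr ⟨u, hu, x, x_ne_zero, hux, mem_missing⟩, add_eq⟩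

theorem exists_forall_sumsets_subset {δ ε : ℝ} (hδ : 0 < δ) (hδ' : δ ≤ 1 / 6) (hε : 0 < ε) :
    ∃ k, ∀ n, sumsets n ⊆ {∅}
      ∪ (nearlyWithin (linearPreimages n k) (1 / 2 - δ) ε).image (fun A ↦ A + A)
      ∪ (nearlyWithin ((linearPreimages n k).image (unpopularSums (δ / 4))) (1 / 2 - δ) ε).image
          compl
      ∪ hyperplaneSupersets n
      ∪ (thinSets n (10 * δ + ε)).image (fun A ↦ A + A) := by
  obtain ⟨k, hk⟩ := exists_linearPreimages_forall_disjoint hε (by positivity : 0 < δ / 4 * ε)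
  refine ⟨k, fun n S hS ↦ ?_⟩
  obtain ⟨A, -, rfl⟩ := mem_image.mp hS
  obtain ⟨P, hP, dens_sdiff_P, schur_le⟩ := hk n A (A + A)ᶜ disjoint_compl_right
  set Q := unpopularSums (δ / 4) P
  have dens_sdiff_Q : (((A + A)ᶜ \ Q).dens : ℝ) ≤ ε :=
    le_of_mul_le_mul_left ((mul_dens_sdiff_unpopularSums_le _ _ _).trans schur_le) (by positivity)
  simp only [mem_union, mem_singleton, mem_image]
  by_cases hP_dens : (P.dens : ℝ) ≤ 1 / 2 - δ
  · have : A ∈ nearlyWithin (linearPreimages n k) (1 / 2 - δ) ε :=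
      (mem_filter_univ A).mpr ⟨P, hP, hP_dens, dens_sdiff_P⟩
    grind
  by_cases hQ_dens : (Q.dens : ℝ) ≤ 1 / 2 - δ
  · have : (A + A)ᶜ ∈
        nearlyWithin ((linearPreimages n k).image (unpopularSums (δ / 4))) (1 / 2 - δ) ε :=
      (mem_filter_univ _).mpr ⟨Q, mem_image_of_mem _ hP, hQ_dens, dens_sdiff_Q⟩
    have : (A + A)ᶜᶜ = A + A := compl_compl _
    grind
  obtain rfl | A_nonempty := A.eq_empty_or_nonempty
  · simp
  obtain ⟨u, hu, c, dens_P_le⟩ := exists_dens_filter_dotProduct_le hδ hδ' (not_le.mp hP_dens).le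
    (not_le.mp hQ_dens).le (schurDensity_unpopularSums_le (by positivity) P)
  have dens_A_le : (({y ∈ A | u ⬝ᵥ y = c} : Finset (V n)).dens : ℝ) ≤ 10 * δ + ε := by
    have subset_union : ({y ∈ A | u ⬝ᵥ y = c} : Finset (V n))
        ⊆ ({y ∈ P | u ⬝ᵥ y = c} : Finset (V n)) ∪ A \ P := by
      grind
    calc (({y ∈ A | u ⬝ᵥ y = c} : Finset (V n)).dens : ℝ)
        ≤ (({y ∈ P | u ⬝ᵥ y = c} : Finset (V n)).dens : ℝ) + (A \ P).dens :=
          mod_cast (dens_le_dens subset_union).trans (dens_union_le _ _)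
      _ ≤ 10 * δ + ε := add_le_add dens_P_le dens_sdiff_P
  have := add_self_mem_hyperplaneSupersets_or_exists_thinSets A_nonempty hu dens_A_le
  grind

end Cover

section Asymptotics

open Filter

lemma eventually_mul_natCast_add_le {c : ℝ} (hc : 0 < c) (a b : ℝ) :
    ∀ᶠ n : ℕ in atTop, a * n + b ≤ c * 2 ^ n := by
  have linear_isLittleO : (fun n : ℕ ↦ a * n + b) =o[atTop] fun n ↦ (2 : ℝ) ^ n := by
    refine ((isLittleO_coe_const_pow_of_one_lt one_lt_two).const_mul_left a).add ?_
    simpa using (isLittleO_pow_const_const_pow_of_one_lt 0 one_lt_two).const_mul_left b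
  filter_upwards [linear_isLittleO.bound hc] with n hn
  simpa using (le_abs_self _).trans hn

lemma card_thinSets_le_rpow {n : ℕ} {t : ℝ} (hn : 2 * n ≤ 1 / 100 * (2 : ℝ) ^ n)
    (ht : #{S : Finset (V n) | (S.dens : ℝ) ≤ t} ≤ (2 : ℝ) ^ (9 / 100 * Fintype.card (V n) : ℝ)) :
    #(thinSets n t) ≤ (2 : ℝ) ^ ((2 : ℝ) ^ n / 2) := by
  have four_pow_le : (4 : ℝ) ^ n ≤ 2 ^ (1 / 100 * (2 : ℝ) ^ n) := by
    calc (4 : ℝ) ^ n = 2 ^ (2 * n : ℝ) := by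
          rw [Real.rpow_mul two_pos.le, Real.rpow_natCast]
          norm_num
      _ ≤ _ := by gcongr; exact one_le_two
  have three_le : (3 : ℝ) ≤ 2 ^ (8 / 5 : ℝ) := by
    rw [← Real.rpow_le_rpow_iff (z := 5) (by norm_num) (by positivity) (by norm_num),
      ← Real.rpow_mul two_pos.le]
    norm_num
  calc (#(thinSets n t) : ℝ)
      ≤ 4 ^ n * (#{S : Finset (V n) | (S.dens : ℝ) ≤ t} * (3 : ℝ) ^ ((2 : ℝ) ^ n / 4)) :=
        card_thinSets_le n t
    _ ≤ 2 ^ (1 / 100 * (2 : ℝ) ^ n) * (2 ^ (9 / 100 * (2 : ℝ) ^ n)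
          * (2 ^ (8 / 5 : ℝ)) ^ ((2 : ℝ) ^ n / 4)) := by
        gcongr
        simpa using ht
    -- The exponents add up: `1 / 100 + 9 / 100 + 2 / 5 = 1 / 2`.
    _ = 2 ^ ((2 : ℝ) ^ n / 2) := by
        rw [← Real.rpow_mul two_pos.le, ← Real.rpow_add two_pos, ← Real.rpow_add two_pos]
        ring_nf

lemma card_linearPreimages_le_rpow {n k : ℕ} {γ : ℝ} (hn : k * n + 2 ^ k ≤ γ * 2 ^ n) :
    #(linearPreimages n k) ≤ (2 : ℝ) ^ (γ * Fintype.card (V n)) :=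
  calc (#(linearPreimages n k) : ℝ) ≤ 2 ^ (k * n + 2 ^ k) := mod_cast card_linearPreimages_le n k
    _ ≤ (2 : ℝ) ^ (γ * Fintype.card (V n)) := by
        rw [← Real.rpow_natCast]
        refine Real.rpow_le_rpow_of_exponent_le one_le_two ?_
        simpa using hn

theorem eventually_card_sumsets_le :
    ∀ᶠ n in atTop, #(sumsets n) ≤ (2 : ℝ) ^ ((2 : ℝ) ^ n / 2) * 2 ^ (n + 3) := by
  obtain ⟨c₀, hc₀, count₀⟩ := exists_forall_card_filter_dens_le (by norm_num : (0 : ℝ) < 9 / 100)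
  obtain ⟨δ, hδ, hδ_lt⟩ := exists_between (lt_min (by norm_num) (by positivity) :
    (0 : ℝ) < min (1 / 6) (c₀ / 20))
  obtain ⟨c₁, hc₁, count₁⟩ := exists_forall_card_filter_dens_le (half_pos hδ)
  obtain ⟨ε, hε, hε_lt⟩ := exists_between (lt_min hc₁ (half_pos hc₀))
  rw [lt_min_iff] at hδ_lt hε_lt
  obtain ⟨k, cover⟩ := exists_forall_sumsets_subset hδ hδ_lt.1.le hε
  filter_upwards [eventually_mul_natCast_add_le (half_pos hδ) k (2 ^ k),
    eventually_mul_natCast_add_le (by norm_num : (0 : ℝ) < 1 / 100) 2 0] with n hk hn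
  set b : ℝ := 2 ^ ((2 : ℝ) ^ n / 2)
  have nearlyWithin_le {ℱ : Finset (Finset (V n))} (hℱ : #ℱ ≤ #(linearPreimages n k)) :
      #(nearlyWithin ℱ (1 / 2 - δ) ε) ≤ b := by
    refine (card_nearlyWithin_le_rpow ((Nat.cast_le.mpr hℱ).trans
      (card_linearPreimages_le_rpow hk)) (count₁ ε hε_lt.1.le (V n))).trans_eq ?_
    simp only [b, Fintype.card_pi_const, ZMod.card]
    push_cast
    ring_nf
  have near_le := nearlyWithin_le le_rfl
  have near_compl_le := nearlyWithin_le (card_image_le (f := unpopularSums (δ / 4)))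
  have supersets_le : #(hyperplaneSupersets n) ≤ 2 ^ n * b := card_hyperplaneSupersets_le n
  have thin_le : #(thinSets n (10 * δ + ε)) ≤ b :=
    card_thinSets_le_rpow (by linarith) (count₀ _ (by linarith [hδ_lt.2, hε_lt.2]) (V n))
  have one_le_b : 1 ≤ b := Real.one_le_rpow one_le_two (by positivity)
  have b_le : b ≤ 2 ^ n * b := le_mul_of_one_le_left (by positivity) (one_le_pow₀ one_le_two)
  have card_le : #(sumsets n) ≤ 1 + #(nearlyWithin (linearPreimages n k) (1 / 2 - δ) ε)
      + #(nearlyWithin ((linearPreimages n k).image (unpopularSums (δ / 4))) (1 / 2 - δ) ε)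
      + #(hyperplaneSupersets n) + #(thinSets n (10 * δ + ε)) := by
    refine (card_le_card (cover n)).trans ((card_union_le _ _).trans ?_)
    grw [card_union_le, card_union_le, card_union_le, card_image_le, card_image_le, card_image_le,
      card_singleton]
  rify at card_le
  rw [pow_add]
  linarith

end Asymptotics

end SumsetCount

theorem sumset_count_upper_general :
    ∃ C : ℕ, 0 < C ∧ ∀ n : ℕ, 1 ≤ n → (sumsets n).card ≤ 2 ^ (2 ^ (n - 1) + n + C) := by
  obtain ⟨n₀, large⟩ := Filter.eventually_atTop.mp SumsetCount.eventually_card_sumsets_le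
  refine ⟨2 ^ n₀ + 3, by positivity, fun n hn ↦ ?_⟩
  obtain h | h := le_total n n₀
  · calc #(sumsets n) ≤ #(univ : Finset (Finset (V n))) := card_le_univ _
      _ = 2 ^ 2 ^ n := by simp
      _ ≤ 2 ^ (2 ^ (n - 1) + n + (2 ^ n₀ + 3)) := by
        gcongr
        · exact one_le_two
        · have : 2 ^ n ≤ 2 ^ n₀ := Nat.pow_le_pow_right two_pos h
          grind
  · have half_eq : (2 : ℝ) ^ n / 2 = (2 ^ (n - 1) : ℕ) := by
      rw [← Nat.sub_add_cancel hn, pow_succ]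
      simp
    have card_le := large n h
    rw [half_eq, Real.rpow_natCast, ← pow_add, ← add_assoc] at card_le
    calc #(sumsets n) ≤ 2 ^ (2 ^ (n - 1) + n + 3) := by exact_mod_cast card_le
      _ ≤ 2 ^ (2 ^ (n - 1) + n + (2 ^ n₀ + 3)) := by
        gcongr
        · exact one_le_two
        · exact Nat.le_add_left _ _

/-- There is a constant `C > 0` with `|𝒮ₙ| ≤ 2^(2^(n−1) + n² + C)` for all `n ≥ 1`. -/
theorem sumset_count_upper :
    ∃ C : ℕ, 0 < C ∧ ∀ n : ℕ, 1 ≤ n →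
      (sumsets n).card ≤ 2 ^ (2 ^ (n - 1) + n ^ 2 + C) := by
  obtain ⟨C, hC, card_le⟩ := sumset_count_upper_general
  refine ⟨C, hC, fun n hn ↦ (card_le n hn).trans ?_⟩
  gcongr
  · exact one_le_two
  · exact Nat.le_self_pow two_ne_zero n
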